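/- Assume ν ≥ 3. Let ℳ be any linear subspace of ℝ^d of codimension ν−1 with ℳ ∩ ker(q) = {0}, and suppose t = (τ_{1,1},…,τ_{ν,k_ν}) is drawn from the probability distribution on ℳ with density proportional to e^{−q(t)}. Then for all indices 1 ≤ m_j, p_j ≤ k_j (j = 1,…,ν): |E[(τ_{1,m_1}+⋯+τ_{ν,m_ν})(τ_{1,p_1}+⋯+τ_{ν,p_ν})]| ≤ Γ/k^{ν−1} with Γ = 14ν⁴R²/(r³ω^{7ν−5}); and if moreover m_j ≠ p_j for every j = 1,…,ν, then |E[(τ_{1,m_1}+⋯+τ_{ν,m_ν})(τ_{1,p_1}+⋯+τ_{ν,p_ν})]| ≤ Γ/k^ν. -/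

import Mathlib

open MeasureTheory Real InnerProductSpace

noncomputable section

variable {ν : ℕ}

/-- The coordinate index set of `ℝ^d`, `d = k_1 + ⋯ + k_ν`. -/
abbrev Idx (kk : Fin ν → ℕ) : Type := Σ j : Fin ν, Fin (kk j)

/-- The multi-index set, of cardinality `n = k_1 ⋯ k_ν`. -/
abbrev MIdx (kk : Fin ν → ℕ) : Type := ∀ j : Fin ν, Fin (kk j)

/-- The ambient Euclidean space `ℝ^d`. -/
abbrev Spc (kk : Fin ν → ℕ) : Type := EuclideanSpace ℝ (Idx kk)

/-- The coordinate functional `t ↦ τ_{j,i}`. -/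
def coordL (kk : Fin ν → ℕ) (p : Idx kk) : Spc kk →ₗ[ℝ] ℝ where
  toFun t := t p
  map_add' _ _ := rfl
  map_smul' _ _ := rfl

/-- The linear functional `t ↦ ⟨a_m, t⟩ = τ_{1,m_1} + ⋯ + τ_{ν,m_ν}`. -/
def linF (kk : Fin ν → ℕ) (m : MIdx kk) : Spc kk →ₗ[ℝ] ℝ :=
  ∑ j : Fin ν, coordL kk ⟨j, m j⟩

/-- The column `a_m` of the constraint matrix `A`. -/
def colA (kk : Fin ν → ℕ) (m : MIdx kk) : Spc kk :=
  (WithLp.equiv 2 (Idx kk → ℝ)).symm (fun p => if p.2 = m p.1 then 1 else 0)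

/-- The quadratic form `q(t) = (1/2) ∑_m α_m (τ_{1,m_1} + ⋯ + τ_{ν,m_ν})²`. -/
def qform (kk : Fin ν → ℕ) (α : MIdx kk → ℝ) (t : Spc kk) : ℝ :=
  (1/2) * ∑ m : MIdx kk, α m * (linF kk m t)^2

/-- The symmetric positive semidefinite matrix `B` with `q(t) = (1/2)⟨t, Bt⟩`,
given explicitly as `B = ∑_m α_m a_m a_mᵀ`. -/
def Bmat (kk : Fin ν → ℕ) (α : MIdx kk → ℝ) : Spc kk →ₗ[ℝ] Spc kk :=
  ∑ m : MIdx kk, α m • (linF kk m).smulRight (colA kk m)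

/-- The sup norm `‖t‖_∞`. -/
def supNorm (kk : Fin ν → ℕ) (t : Spc kk) : ℝ := ‖(WithLp.equiv 2 (Idx kk → ℝ)) t‖

/-- The subspace `ℒ = {t : τ_{j,k_j} = 0 for j = 2,…,ν}`. -/
def Lsub (kk : Fin ν → ℕ) (hk : ∀ j, 0 < kk j) : Submodule ℝ (Spc kk) :=
  ⨅ (j : {j : Fin ν // (j : ℕ) ≠ 0}),
    LinearMap.ker (coordL kk ⟨j.1, ⟨kk j.1 - 1, Nat.sub_lt (hk j.1) one_pos⟩⟩)

/-- The expectation of `f` under the probability distribution on a subspace `ℳ` with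
density proportional to `e^{−q(t)}`. -/
def expM (kk : Fin ν → ℕ) (M : Submodule ℝ (Spc kk)) (α : MIdx kk → ℝ) (f : Spc kk → ℝ) : ℝ :=
  (∫ t : ↥M, f (t : Spc kk) * Real.exp (-(qform kk α (t : Spc kk)))) /
    (∫ t : ↥M, Real.exp (-(qform kk α (t : Spc kk))))

/-!
Gaussian integration by parts turns `E[L_m L_p]`, where `L_m t = τ_{1,m_1} + ⋯ + τ_{ν,m_ν}`, into
`L_m x`, where `x ∈ ℳ` solves `⟨Bx, t⟩ = L_p t` for `t ∈ ℳ`. Each `L_p` vanishes on `ker q`, which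
is a complement of `ℳ`, so `x` solves these normal equations on all of `ℝ^d`.

Scaling `x` by `k_1 ⋯ k_ν` turns the sums in these equations into averages over multi-indices. The
solution of their diagonal part contributes a term of size `k_j / r` for each `j` with `m_j = p_j`.
Subtracting it leaves a remainder whose normal equations have a right-hand side bounded by the
blockwise `L¹` norm. Adding constants to the blocks, a shift along `ker q`, makes all block means of
the remainder equal. The cross terms of the average of its squared block sums are then squares of
that common mean, so the energy dominates the sum of the squared block `L²` norms. This bounds the
blockwise `L¹` norm, and feeding that bound back into the coordinate equations gives a sup bound
independent of the `k_j`.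
-/

section BlockSums

open Finset
open scoped BigOperators

lemma expect_abs_single {ι : Type*} [Fintype ι] [DecidableEq ι] (i : ι) (a : ℝ) :
    𝔼 i', |(Pi.single i a : ι → ℝ) i'| = |a| / Fintype.card ι := by
  rw [Fintype.expect_eq_sum_div_card]
  simp [Pi.single_apply, apply_ite abs]

variable {J : Type*} [Fintype J] {κ : J → Type*} [∀ j, Fintype (κ j)]

/-- The function `n ↦ ∑ j, x j (n j)`. -/
def blockSum (x : ∀ j, κ j → ℝ) (n : ∀ j, κ j) : ℝ := ∑ j, x j (n j)

lemma exists_blockSum_eq_of_equal_means [∀ j, Nonempty (κ j)] (z : ∀ j, κ j → ℝ) :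
    ∃ (y : ∀ j, κ j → ℝ) (c : ℝ), (∀ j, 𝔼 i, y j i = c) ∧ ∀ n, blockSum y n = blockSum z n := by
  refine ⟨fun j i ↦ z j i - 𝔼 i', z j i' + 𝔼 l, 𝔼 i', z l i', 𝔼 l, 𝔼 i', z l i',
    fun j ↦ ?_, fun n ↦ ?_⟩
  · simp only [expect_add_distrib, expect_sub_distrib, Fintype.expect_const]
    ring
  · simp only [blockSum, sum_add_distrib, sum_sub_distrib, sum_const, card_univ,
      Fintype.card_smul_expect]
    ring

lemma sq_sum_expect_abs_le (y : ∀ j, κ j → ℝ) :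
    (∑ j, 𝔼 i, |y j i|) ^ 2 ≤ Fintype.card J * ∑ j, 𝔼 i, y j i ^ 2 := by
  refine sq_sum_le_card_mul_sum_sq.trans ?_
  rw [card_univ]
  gcongr with j
  have hjensen := expect_mul_sq_le_sq_mul_sq univ (fun i ↦ |y j i|) 1
  obtain h | h := isEmpty_or_nonempty (κ j)
  · simp
  · simpa using hjensen

variable [DecidableEq J]

lemma expect_pi_prod [∀ j, Nonempty (κ j)] (s : Finset J) (f : ∀ j, κ j → ℝ) :
    𝔼 n : ∀ j, κ j, ∏ j ∈ s, f j (n j) = ∏ j ∈ s, 𝔼 i, f j i := by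
  have expect_univ (g : ∀ j, κ j → ℝ) : 𝔼 n : ∀ j, κ j, ∏ j, g j (n j) = ∏ j, 𝔼 i, g j i := by
    simp only [Fintype.expect_eq_sum_div_card, prod_div_distrib, prod_univ_sum,
      Fintype.piFinset_univ, Fintype.card_pi, Nat.cast_prod]
  have h := expect_univ fun j i ↦ if j ∈ s then f j i else 1
  have hfactor (j : J) :
      𝔼 i, (if j ∈ s then f j i else 1) = if j ∈ s then 𝔼 i, f j i else 1 := by
    split_ifs <;> simp
  simpa only [hfactor, prod_ite_mem, univ_inter] using h

lemma expect_pi_apply [∀ j, Nonempty (κ j)] (j : J) (f : κ j → ℝ) :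
    𝔼 n : ∀ l, κ l, f (n j) = 𝔼 i, f i := by
  simpa using expect_pi_prod {j} (Function.update (fun _ _ ↦ 1) j f)

lemma expect_pi_mul [∀ j, Nonempty (κ j)] {j l : J} (hjl : j ≠ l) (f : κ j → ℝ) (g : κ l → ℝ) :
    𝔼 n : ∀ l, κ l, f (n j) * g (n l) = (𝔼 i, f i) * 𝔼 i, g i := by
  simpa [prod_pair hjl, hjl] using
    expect_pi_prod {j, l} (Function.update (Function.update (fun _ _ ↦ 1) j f) l g)

lemma sum_expect_sq_le_expect_blockSum_sq [∀ j, Nonempty (κ j)] {y : ∀ j, κ j → ℝ} {c : ℝ}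
    (hy : ∀ j, 𝔼 i, y j i = c) :
    ∑ j, 𝔼 i, y j i ^ 2 ≤ 𝔼 n, blockSum y n ^ 2 := by
  have hexpand : 𝔼 n, blockSum y n ^ 2 = ∑ j, ∑ l, 𝔼 n : ∀ j, κ j, y j (n j) * y l (n l) := by
    simp only [blockSum, sq, sum_mul_sum, expect_sum_comm]
  rw [hexpand]
  refine sum_le_sum fun j _ ↦ ?_
  rw [← add_sum_erase _ _ (mem_univ j)]
  have hdiag : 𝔼 n : ∀ j, κ j, y j (n j) * y j (n j) = 𝔼 i, y j i ^ 2 := by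
    simpa only [sq] using expect_pi_apply j fun i ↦ y j i * y j i
  have hoff : 0 ≤ ∑ l ∈ univ.erase j, 𝔼 n : ∀ j, κ j, y j (n j) * y l (n l) :=
    sum_nonneg fun l hl ↦ by
      rw [expect_pi_mul (ne_of_mem_erase hl).symm, hy, hy]
      exact mul_self_nonneg c
  linarith

variable {r R K : ℝ} {α : (∀ j, κ j) → ℝ}

lemma abs_expect_blockSum_mul_sub_le [∀ j, Nonempty (κ j)] (hα : ∀ n, |α n| ≤ R)
    (u v : ∀ j, κ j → ℝ) :
    |𝔼 n, α n * (blockSum u n * blockSum v n) - ∑ j, 𝔼 n, α n * (u j (n j) * v j (n j))|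
      ≤ R * ((∑ j, 𝔼 i, |u j i|) * ∑ j, 𝔼 i, |v j i|) := by
  have hR : 0 ≤ R := (abs_nonneg _).trans (hα (Classical.arbitrary _))
  have hexpand : 𝔼 n, α n * (blockSum u n * blockSum v n)
      - ∑ j, 𝔼 n, α n * (u j (n j) * v j (n j))
      = ∑ j, ∑ l ∈ univ.erase j, 𝔼 n, α n * (u j (n j) * v l (n l)) := by
    simp only [blockSum, sum_mul_sum, sum_erase_eq_sub (mem_univ _), sum_sub_distrib,
      ← expect_sum_comm, ← mul_sum]
  have hcross {j l : J} (hjl : j ≠ l) :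
      |𝔼 n, α n * (u j (n j) * v l (n l))| ≤ R * ((𝔼 i, |u j i|) * 𝔼 i, |v l i|) := by
    rw [← expect_pi_mul hjl, mul_expect]
    refine (abs_expect_le _ _).trans (expect_le_expect fun n _ ↦ ?_)
    rw [abs_mul, abs_mul]
    exact mul_le_mul_of_nonneg_right (hα n) (by positivity)
  rw [hexpand, sum_mul_sum, mul_sum]
  refine (abs_sum_le_sum_abs _ _).trans (sum_le_sum fun j _ ↦ ?_)
  rw [mul_sum]
  refine (abs_sum_le_sum_abs _ _).trans ?_
  calc ∑ l ∈ univ.erase j, |𝔼 n, α n * (u j (n j) * v l (n l))|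
      ≤ ∑ l ∈ univ.erase j, R * ((𝔼 i, |u j i|) * 𝔼 i, |v l i|) :=
        sum_le_sum fun l hl ↦ hcross (ne_of_mem_erase hl).symm
    _ ≤ ∑ l, R * ((𝔼 i, |u j i|) * 𝔼 i, |v l i|) :=
        sum_le_sum_of_subset_of_nonneg (erase_subset _ _) fun l _ _ ↦ by positivity

lemma sum_expect_abs_le [∀ j, Nonempty (κ j)] (hr : 0 < r) (hα : ∀ n, r ≤ α n) (hK : 0 ≤ K)
    {y : ∀ j, κ j → ℝ} {c : ℝ} (hy : ∀ j, 𝔼 i, y j i = c)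
    (henergy : 𝔼 n, α n * (blockSum y n * blockSum y n) ≤ K * ∑ j, 𝔼 i, |y j i|) :
    ∑ j, 𝔼 i, |y j i| ≤ Fintype.card J * K / r := by
  set T := ∑ j, 𝔼 i, |y j i|
  have hT : 0 ≤ T := by positivity
  have hlower : r * 𝔼 n, blockSum y n ^ 2 ≤ 𝔼 n, α n * (blockSum y n * blockSum y n) := by
    rw [mul_expect]
    exact expect_le_expect fun n _ ↦ by
      rw [← sq]; exact mul_le_mul_of_nonneg_right (hα n) (sq_nonneg _)
  have hquadratic : (r * T) * T ≤ (Fintype.card J * K) * T :=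
    calc (r * T) * T = r * T ^ 2 := by ring
      _ ≤ r * (Fintype.card J * ∑ j, 𝔼 i, y j i ^ 2) := by gcongr; exact sq_sum_expect_abs_le y
      _ ≤ r * (Fintype.card J * 𝔼 n, blockSum y n ^ 2) := by
        gcongr; exact sum_expect_sq_le_expect_blockSum_sq hy
      _ = Fintype.card J * (r * 𝔼 n, blockSum y n ^ 2) := by ring
      _ ≤ Fintype.card J * (K * T) := by gcongr ?_ * ?_; exact hlower.trans henergy
      _ = (Fintype.card J * K) * T := by ring
  rw [le_div_iff₀' hr]
  obtain hT0 | hTpos := hT.eq_or_lt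
  · rw [← hT0]; simpa using by positivity
  · exact le_of_mul_le_mul_right hquadratic hTpos

variable [∀ j, DecidableEq (κ j)]

/-- The diagonal entry, at coordinate `(j, i)`, of the normal equations of the least squares
problem for `blockSum` with weights `α`. -/
def diagWeight (α : (∀ j, κ j) → ℝ) (j : J) (i : κ j) : ℝ := 𝔼 n, if n j = i then α n else 0

lemma div_card_le_diagWeight [∀ j, Nonempty (κ j)] (hα : ∀ n, r ≤ α n) (j : J) (i : κ j) :
    r / Fintype.card (κ j) ≤ diagWeight α j i := by
  have hconst : 𝔼 n : ∀ j, κ j, (if n j = i then r else 0) = r / Fintype.card (κ j) := by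
    rw [expect_pi_apply j fun i' ↦ if i' = i then r else 0, Fintype.expect_eq_sum_div_card]
    simp
  rw [← hconst, diagWeight]
  exact expect_le_expect fun n _ ↦ by split_ifs <;> simp [hα]

lemma diagWeight_pos [∀ j, Nonempty (κ j)] (hr : 0 < r) (hα : ∀ n, r ≤ α n) (j : J) (i : κ j) :
    0 < diagWeight α j i :=
  (by positivity : 0 < r / Fintype.card (κ j)).trans_le (div_card_le_diagWeight hα j i)

lemma expect_mul_single_mul (j : J) (i : κ j) (a : ℝ) (v : κ j → ℝ) :
    𝔼 n, α n * ((Pi.single i a : κ j → ℝ) (n j) * v (n j)) = diagWeight α j i * (a * v i) := by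
  rw [diagWeight, expect_mul]
  refine expect_congr rfl fun n _ ↦ ?_
  obtain rfl | hne := eq_or_ne (n j) i <;> simp [*]

lemma abs_diagWeight_mul_le [∀ j, Nonempty (κ j)] (hα : ∀ n, |α n| ≤ R) {y : ∀ j, κ j → ℝ}
    (hres : ∀ u : ∀ j, κ j → ℝ,
      |𝔼 n, α n * (blockSum u n * blockSum y n)| ≤ K * ∑ j, 𝔼 i, |u j i|)
    (j : J) (i : κ j) :
    |diagWeight α j i * y j i| ≤ (K + R * ∑ l, 𝔼 i', |y l i'|) / Fintype.card (κ j) := by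
  set u : ∀ l, κ l → ℝ := Pi.single j (Pi.single i 1)
  have hu : ∑ l, 𝔼 i', |u l i'| = 1 / Fintype.card (κ j) := by
    rw [Fintype.sum_eq_single j fun l hl ↦ by simp [u, hl]]
    simpa [u] using expect_abs_single i 1
  have hdiag : ∑ l, 𝔼 n, α n * (u l (n l) * y l (n l)) = diagWeight α j i * y j i := by
    rw [Fintype.sum_eq_single j fun l hl ↦ by simp [u, hl]]
    simpa [u] using expect_mul_single_mul j i 1 (y j)
  have hoff := abs_expect_blockSum_mul_sub_le hα u y
  have htest := hres u
  rw [hu] at hoff htest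
  rw [hdiag, abs_sub_comm] at hoff
  calc |diagWeight α j i * y j i|
      ≤ K * (1 / Fintype.card (κ j)) + R * (1 / Fintype.card (κ j) * ∑ l, 𝔼 i', |y l i'|) := by
        linarith [abs_sub_abs_le_abs_sub (diagWeight α j i * y j i)
          (𝔼 n, α n * (blockSum u n * blockSum y n))]
    _ = (K + R * ∑ l, 𝔼 i', |y l i'|) / Fintype.card (κ j) := by ring

omit [∀ j, DecidableEq (κ j)] in
lemma abs_blockSum_le_of_equal_means [∀ j, Nonempty (κ j)] (hr : 0 < r) (hα : ∀ n, r ≤ α n)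
    (hαR : ∀ n, α n ≤ R) (hK : 0 ≤ K) {y : ∀ j, κ j → ℝ} {c : ℝ} (hy : ∀ j, 𝔼 i, y j i = c)
    (hres : ∀ u : ∀ j, κ j → ℝ,
      |𝔼 n, α n * (blockSum u n * blockSum y n)| ≤ K * ∑ j, 𝔼 i, |u j i|)
    (m : ∀ j, κ j) :
    |blockSum y m| ≤ Fintype.card J * ((K + R * (Fintype.card J * K / r)) / r) := by
  classical
  have hαabs (n) : |α n| ≤ R := abs_le.2 ⟨by linarith [hα n, hαR n], hαR n⟩
  have hR : 0 ≤ R := (abs_nonneg _).trans (hαabs m)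
  have hmean := sum_expect_abs_le hr hα hK hy ((le_abs_self _).trans (hres y))
  have hcoord (j : J) : |y j (m j)| ≤ (K + R * (Fintype.card J * K / r)) / r := by
    have hweighted := abs_diagWeight_mul_le hαabs hres j (m j)
    rw [abs_mul, abs_of_pos (diagWeight_pos hr hα j (m j))] at hweighted
    refine le_of_mul_le_mul_left ?_ (by positivity : 0 < r / Fintype.card (κ j))
    calc r / Fintype.card (κ j) * |y j (m j)|
        ≤ diagWeight α j (m j) * |y j (m j)| := by gcongr; exact div_card_le_diagWeight hα j (m j)
      _ ≤ (K + R * ∑ l, 𝔼 i, |y l i|) / Fintype.card (κ j) := hweighted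
      _ ≤ (K + R * (Fintype.card J * K / r)) / Fintype.card (κ j) := by gcongr
      _ = r / Fintype.card (κ j) * ((K + R * (Fintype.card J * K / r)) / r) := by field_simp
  simpa [blockSum] using (abs_sum_le_sum_abs _ _).trans (sum_le_sum fun j (_ : j ∈ univ) ↦ hcoord j)

/-- The solution of the diagonal part of the normal equations whose right-hand side is
evaluation of `blockSum` at `p`. -/
def diagSolution (α : (∀ j, κ j) → ℝ) (p : ∀ j, κ j) (j : J) : κ j → ℝ :=
  Pi.single (p j) (diagWeight α j (p j))⁻¹

lemma sum_expect_mul_diagSolution [∀ j, Nonempty (κ j)] (hr : 0 < r) (hα : ∀ n, r ≤ α n)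
    (p : ∀ j, κ j) (u : ∀ j, κ j → ℝ) :
    ∑ j, 𝔼 n, α n * (u j (n j) * diagSolution α p j (n j)) = blockSum u p := by
  refine sum_congr rfl fun j _ ↦ ?_
  have := (diagWeight_pos hr hα j (p j)).ne'
  simp only [diagSolution, mul_comm (u j _), expect_mul_single_mul]
  field_simp

lemma inv_diagWeight_le [∀ j, Nonempty (κ j)] (hr : 0 < r) (hα : ∀ n, r ≤ α n) (j : J) (i : κ j) :
    (diagWeight α j i)⁻¹ ≤ Fintype.card (κ j) / r := by
  rw [← inv_div]
  exact inv_anti₀ (by positivity) (div_card_le_diagWeight hα j i)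

lemma sum_expect_abs_diagSolution_le [∀ j, Nonempty (κ j)] (hr : 0 < r) (hα : ∀ n, r ≤ α n)
    (p : ∀ j, κ j) :
    ∑ j, 𝔼 i, |diagSolution α p j i| ≤ Fintype.card J / r := by
  have hblock (j : J) : 𝔼 i, |diagSolution α p j i| ≤ 1 / r := by
    have hpos := diagWeight_pos hr hα j (p j)
    rw [diagSolution, expect_abs_single, abs_of_pos (by positivity), div_le_iff₀ (by positivity)]
    exact (inv_diagWeight_le hr hα j (p j)).trans_eq (by ring)
  simpa [div_eq_mul_inv] using sum_le_sum fun j (_ : j ∈ univ) ↦ hblock j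

lemma abs_blockSum_diagSolution_le [∀ j, Nonempty (κ j)] (hr : 0 < r) (hα : ∀ n, r ≤ α n)
    (p m : ∀ j, κ j) :
    |blockSum (diagSolution α p) m| ≤ (∑ j with m j = p j, (Fintype.card (κ j) : ℝ)) / r := by
  rw [blockSum, sum_filter, sum_div]
  refine (abs_sum_le_sum_abs _ _).trans (sum_le_sum fun j _ ↦ ?_)
  have hpos := diagWeight_pos hr hα j (p j)
  by_cases hj : m j = p j
  · simpa [diagSolution, hj, abs_of_pos hpos] using inv_diagWeight_le hr hα j (p j)
  · simp [diagSolution, hj]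

lemma abs_expect_blockSum_mul_residual_le [∀ j, Nonempty (κ j)] (hr : 0 < r)
    (hα : ∀ n, r ≤ α n) (hαR : ∀ n, α n ≤ R) {x y : ∀ j, κ j → ℝ} {p : ∀ j, κ j}
    (hx : ∀ u : ∀ j, κ j → ℝ, 𝔼 n, α n * (blockSum u n * blockSum x n) = blockSum u p)
    (hy : ∀ n, blockSum y n = blockSum x n - blockSum (diagSolution α p) n)
    (u : ∀ j, κ j → ℝ) :
    |𝔼 n, α n * (blockSum u n * blockSum y n)|
      ≤ R * (Fintype.card J / r) * ∑ j, 𝔼 i, |u j i| := by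
  have hαabs (n) : |α n| ≤ R := abs_le.2 ⟨by linarith [hα n, hαR n], hαR n⟩
  have hR : 0 ≤ R := (abs_nonneg _).trans (hαabs p)
  have hoff := abs_expect_blockSum_mul_sub_le hαabs u (diagSolution α p)
  rw [sum_expect_mul_diagSolution hr hα, abs_sub_comm] at hoff
  calc |𝔼 n, α n * (blockSum u n * blockSum y n)|
      = |blockSum u p - 𝔼 n, α n * (blockSum u n * blockSum (diagSolution α p) n)| := by
        simp only [hy, mul_sub, expect_sub_distrib, hx]
    _ ≤ R * ((∑ j, 𝔼 i, |u j i|) * ∑ j, 𝔼 i, |diagSolution α p j i|) := hoff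
    _ ≤ R * ((∑ j, 𝔼 i, |u j i|) * (Fintype.card J / r)) := by
        gcongr; exact sum_expect_abs_diagSolution_le hr hα p
    _ = R * (Fintype.card J / r) * ∑ j, 𝔼 i, |u j i| := by ring

lemma residual_constant_le {d : ℕ} (hr : 0 < r) (hrR : r ≤ R) :
    d * ((R * (d / r) + R * (d * (R * (d / r)) / r)) / r) ≤ 2 * d ^ 3 * R ^ 2 / r ^ 3 := by
  have hd : (d : ℝ) ^ 2 ≤ (d : ℝ) ^ 3 := by
    obtain rfl | hpos := d.eq_zero_or_pos
    · simp
    · exact_mod_cast Nat.pow_le_pow_right hpos (by norm_num)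
  have hrR2 : R * r ≤ R ^ 2 := by nlinarith
  calc d * ((R * (d / r) + R * (d * (R * (d / r)) / r)) / r)
      = (d ^ 2 * (R * r) + d ^ 3 * R ^ 2) / r ^ 3 := by field_simp
    _ ≤ (d ^ 3 * R ^ 2 + d ^ 3 * R ^ 2) / r ^ 3 := by gcongr; nlinarith
    _ = 2 * d ^ 3 * R ^ 2 / r ^ 3 := by ring

theorem abs_blockSum_le_of_normal_equations (hr : 0 < r) (hα : ∀ n, r ≤ α n)
    (hαR : ∀ n, α n ≤ R) {x : ∀ j, κ j → ℝ} {p : ∀ j, κ j}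
    (hx : ∀ u : ∀ j, κ j → ℝ, 𝔼 n, α n * (blockSum u n * blockSum x n) = blockSum u p)
    (m : ∀ j, κ j) :
    |blockSum x m| ≤ (∑ j with m j = p j, (Fintype.card (κ j) : ℝ)) / r
      + 2 * Fintype.card J ^ 3 * R ^ 2 / r ^ 3 := by
  have (j : J) : Nonempty (κ j) := ⟨p j⟩
  have hrR : r ≤ R := (hα p).trans (hαR p)
  have hR : 0 ≤ R := hr.le.trans hrR
  obtain ⟨y, c, hmean, hy⟩ :=
    exists_blockSum_eq_of_equal_means fun j i ↦ x j i - diagSolution α p j i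
  replace hy (n) : blockSum y n = blockSum x n - blockSum (diagSolution α p) n := by
    rw [hy]
    simp only [blockSum, sum_sub_distrib]
  have hremainder := (abs_blockSum_le_of_equal_means hr hα hαR (by positivity) hmean
    (abs_expect_blockSum_mul_residual_le hr hα hαR hx hy) m).trans (residual_constant_le hr hrR)
  calc |blockSum x m| = |blockSum (diagSolution α p) m + blockSum y m| := by
        rw [hy, add_sub_cancel]
    _ ≤ |blockSum (diagSolution α p) m| + |blockSum y m| := abs_add_le _ _
    _ ≤ _ := add_le_add (abs_blockSum_diagSolution_le hr hα p m) hremainder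

end BlockSums

section Gaussian

open Module

section Coercive
variable {V : Type*} [NormedAddCommGroup V]

lemma isCoercive_of_pos [NormedSpace ℝ V] [FiniteDimensional ℝ V] {B : V →L[ℝ] V →L[ℝ] ℝ}
    (hB : ∀ x ≠ 0, 0 < B x x) : IsCoercive B := by
  obtain hV | hV := subsingleton_or_nontrivial V
  · exact ⟨1, one_pos, fun x ↦ by simp [Subsingleton.elim x 0]⟩
  have hcont : Continuous fun x ↦ B x x := by fun_prop
  obtain ⟨e, he, hmin⟩ := (isCompact_sphere (0 : V) 1).exists_isMinOn
    (NormedSpace.sphere_nonempty.2 zero_le_one) hcont.continuousOn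
  refine ⟨B e e, hB e (ne_zero_of_mem_unit_sphere ⟨e, he⟩), fun x ↦ ?_⟩
  obtain rfl | hx := eq_or_ne x 0
  · simp
  have hunit : B e e ≤ B (‖x‖⁻¹ • x) (‖x‖⁻¹ • x) :=
    hmin (by simp [norm_smul, hx])
  simp only [map_smul, smul_apply, smul_eq_mul] at hunit
  have : 0 < ‖x‖ := norm_pos_iff.2 hx
  calc B e e * ‖x‖ * ‖x‖ ≤ ‖x‖⁻¹ * (‖x‖⁻¹ * B x x) * ‖x‖ * ‖x‖ := by gcongr
    _ = B x x := by field_simp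

lemma exists_apply_eq_of_isCoercive [InnerProductSpace ℝ V] [CompleteSpace V]
    {B : V →L[ℝ] V →L[ℝ] ℝ} (hB : IsCoercive B) (P : V →L[ℝ] ℝ) : ∃ x, B x = P := by
  refine ⟨hB.continuousLinearEquivOfBilin.symm ((toDual ℝ V).symm P), ?_⟩
  ext t
  rw [← hB.continuousLinearEquivOfBilin_apply]
  simp

lemma hasLineDerivAt_exp_neg_half [NormedSpace ℝ V] {B : V →L[ℝ] V →L[ℝ] ℝ}
    (hsymm : ∀ s t, B s t = B t s) (t x : V) :
    HasLineDerivAt ℝ (fun t ↦ exp (-(B t t / 2))) (-(B x t * exp (-(B t t / 2)))) t x := by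
  have hquad : HasDerivAt (fun s : ℝ ↦ -((B t t + s * (2 * B x t) + s ^ 2 * B x x) / 2))
      (-(B x t)) 0 := by
    have := ((((hasDerivAt_id (0 : ℝ)).mul_const (2 * B x t)).const_add (B t t)).add
      (((hasDerivAt_id (0 : ℝ)).pow 2).mul_const (B x x))).div_const 2 |>.neg
    convert! this using 1
    simp
  have hexpand (s : ℝ) :
      B (t + s • x) (t + s • x) = B t t + s * (2 * B x t) + s ^ 2 * B x x := by
    simp only [map_add, map_smul, add_apply, smul_apply,
      smul_eq_mul, hsymm t x]
    ring
  simp only [HasLineDerivAt, hexpand]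
  convert! hquad.exp using 1
  simp [mul_comm]

end Coercive

variable {V : Type*} [NormedAddCommGroup V] [NormedSpace ℝ V] [FiniteDimensional ℝ V]
  [MeasurableSpace V] [BorelSpace V] {μ : Measure V} [μ.IsAddHaarMeasure]

lemma integrable_norm_pow_mul_exp_neg_mul_norm_sq {b : ℝ} (hb : 0 < b) (k : ℕ) :
    Integrable (fun t : V ↦ ‖t‖ ^ k * exp (-b * ‖t‖ ^ 2)) μ := by
  obtain hV | hV := subsingleton_or_nontrivial V
  · exact .of_finite
  refine (integrable_fun_norm_addHaar μ (f := fun s ↦ s ^ k * exp (-b * s ^ 2))).2 ?_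
  have h := integrableOn_rpow_mul_exp_neg_mul_sq hb
    (s := (finrank ℝ V - 1 + k : ℕ)) (neg_one_lt_zero.trans_le (by positivity))
  simpa only [rpow_natCast, pow_add, mul_assoc, smul_eq_mul] using h

variable {B : V →L[ℝ] V →L[ℝ] ℝ}

lemma integrable_mul_exp_neg_half (hB : IsCoercive B) {f : V → ℝ} (hf : AEStronglyMeasurable f μ)
    {C : ℝ} {k : ℕ} (hfC : ∀ t, ‖f t‖ ≤ C * ‖t‖ ^ k) :
    Integrable (fun t ↦ f t * exp (-(B t t / 2))) μ := by
  obtain ⟨c, hc, hcB⟩ := hB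
  refine ((integrable_norm_pow_mul_exp_neg_mul_norm_sq (μ := μ) (half_pos hc) k).const_mul C).mono'
    (hf.mul (by fun_prop)) (ae_of_all _ fun t ↦ ?_)
  rw [norm_mul, norm_of_nonneg (exp_pos _).le, ← mul_assoc]
  gcongr
  · exact (norm_nonneg _).trans (hfC t)
  · exact hfC t
  · linarith [hcB t]

lemma integrable_exp_neg_half (hB : IsCoercive B) :
    Integrable (fun t ↦ exp (-(B t t / 2))) μ := by
  simpa using integrable_mul_exp_neg_half (μ := μ) hB (f := 1) (by fun_prop) (C := 1) (k := 0)
    (by simp)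

theorem integral_mul_mul_exp_neg_half (hB : IsCoercive B) (hsymm : ∀ s t, B s t = B t s)
    (L : V →L[ℝ] ℝ) (x : V) :
    ∫ t, L t * B x t * exp (-(B t t / 2)) ∂μ = L x * ∫ t, exp (-(B t t / 2)) ∂μ := by
  have hlin : Integrable (fun t ↦ L t * exp (-(B t t / 2))) μ :=
    integrable_mul_exp_neg_half hB (by fun_prop) (C := ‖L‖) (k := 1) (by simpa using L.le_opNorm)
  have hquad : Integrable (fun t ↦ L t * B x t * exp (-(B t t / 2))) μ :=
    integrable_mul_exp_neg_half hB (by fun_prop) (C := ‖L‖ * ‖B x‖) (k := 2) fun t ↦ by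
      rw [norm_mul]
      calc ‖L t‖ * ‖B x t‖ ≤ ‖L‖ * ‖t‖ * (‖B x‖ * ‖t‖) :=
            mul_le_mul (L.le_opNorm t) ((B x).le_opNorm t) (by positivity) (by positivity)
        _ = ‖L‖ * ‖B x‖ * ‖t‖ ^ 2 := by ring
  have hparts := integral_bilinear_hasLineDerivAt_right_eq_neg_left_of_integrable
    (B := .mul ℝ ℝ) (by simpa using (integrable_exp_neg_half (μ := μ) hB).const_mul (L x))
    (by simpa [mul_assoc] using hquad.neg)
    (by simpa using hlin) (fun t _ ↦ L.hasFDerivAt.hasLineDerivAt x)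
    (fun t _ ↦ hasLineDerivAt_exp_neg_half hsymm t x)
  simpa [mul_assoc, integral_neg, integral_const_mul] using hparts

end Gaussian

open scoped BigOperators

lemma linF_apply (kk : Fin ν → ℕ) (n : MIdx kk) (t : Spc kk) : linF kk n t = ∑ j, t ⟨j, n j⟩ :=
  LinearMap.sum_apply ..

lemma inner_colA (kk : Fin ν → ℕ) (n : MIdx kk) (t : Spc kk) : ⟪colA kk n, t⟫_ℝ = linF kk n t := by
  simp [PiLp.inner_apply, Fintype.sum_sigma, colA, linF_apply]

lemma inner_Bmat (kk : Fin ν → ℕ) (α : MIdx kk → ℝ) (s t : Spc kk) :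
    ⟪Bmat kk α s, t⟫_ℝ = ∑ n, α n * (linF kk n s * linF kk n t) := by
  simp [Bmat, LinearMap.sum_apply, sum_inner, real_inner_smul_left, inner_colA]

lemma mem_ker_Bmat_iff {kk : Fin ν → ℕ} {α : MIdx kk → ℝ} (hα : ∀ n, 0 < α n) (t : Spc kk) :
    t ∈ LinearMap.ker (Bmat kk α) ↔ ∀ n, linF kk n t = 0 := by
  refine ⟨fun h ↦ ?_, fun h ↦ by simp [Bmat, LinearMap.sum_apply, h]⟩
  have hzero : ∑ n, α n * (linF kk n t * linF kk n t) = 0 := by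
    rw [← inner_Bmat, LinearMap.mem_ker.1 h, inner_zero_left]
  rw [Fintype.sum_eq_zero_iff_of_nonneg
    fun n ↦ mul_nonneg (hα n).le (mul_self_nonneg _)] at hzero
  intro n
  simpa [(hα n).ne'] using congrFun hzero n

/-- The linear map sending a family `u` to the vector with coordinates `τ_{j,i} = u j`. -/
def blockConst (kk : Fin ν → ℕ) : (Fin ν → ℝ) →ₗ[ℝ] Spc kk where
  toFun u := WithLp.toLp 2 fun q ↦ u q.1
  map_add' _ _ := rfl
  map_smul' _ _ := rfl

lemma blockConst_injective {kk : Fin ν → ℕ} (hkk : ∀ j, 0 < kk j) :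
    Function.Injective (blockConst kk) :=
  fun _ _ h ↦ funext fun j ↦ congrArg (fun t : Spc kk ↦ t ⟨j, 0, hkk j⟩) h

lemma linF_blockConst (kk : Fin ν → ℕ) (n : MIdx kk) (u : Fin ν → ℝ) :
    linF kk n (blockConst kk u) = ∑ j, u j :=
  linF_apply ..

lemma pred_le_finrank_ker_Bmat {kk : Fin ν → ℕ} (hkk : ∀ j, 0 < kk j) {α : MIdx kk → ℝ}
    (hα : ∀ n, 0 < α n) : ν - 1 ≤ Module.finrank ℝ (LinearMap.ker (Bmat kk α)) := by
  let coordSum : (Fin ν → ℝ) →ₗ[ℝ] ℝ := ∑ j, LinearMap.proj j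
  have hmap : (LinearMap.ker coordSum).map (blockConst kk) ≤ LinearMap.ker (Bmat kk α) := by
    rintro _ ⟨u, hu, rfl⟩
    rw [mem_ker_Bmat_iff hα]
    intro n
    simpa [linF_blockConst, coordSum, LinearMap.sum_apply] using hu
  have hrank := LinearMap.finrank_range_add_finrank_ker coordSum
  have hrange : Module.finrank ℝ (LinearMap.range coordSum) ≤ 1 := by
    simpa using Submodule.finrank_le (LinearMap.range coordSum)
  have hle := Submodule.finrank_mono hmap
  rw [← (Submodule.equivMapOfInjective _ (blockConst_injective hkk) _).finrank_eq] at hle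
  rw [Module.finrank_fin_fun] at hrank
  omega

lemma isCompl_ker_Bmat {kk : Fin ν → ℕ} (hkk : ∀ j, 0 < kk j) {α : MIdx kk → ℝ}
    (hα : ∀ n, 0 < α n) {M : Submodule ℝ (Spc kk)}
    (hcodim : Module.finrank ℝ M + (ν - 1) = Module.finrank ℝ (Spc kk))
    (hMker : M ⊓ LinearMap.ker (Bmat kk α) = ⊥) : IsCompl M (LinearMap.ker (Bmat kk α)) := by
  refine ⟨disjoint_iff.2 hMker, codisjoint_iff.2 <| Submodule.eq_top_of_disjoint _ _ ?_ <|
    disjoint_iff.2 hMker⟩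
  have := pred_le_finrank_ker_Bmat hkk hα
  omega

/-- The bilinear form `(s, t) ↦ ⟨Bs, t⟩` on `ℳ`, whose quadratic form is `2q`. -/
def energyForm (kk : Fin ν → ℕ) (α : MIdx kk → ℝ) (M : Submodule ℝ (Spc kk)) : M →L[ℝ] M →L[ℝ] ℝ :=
  ((innerSL ℝ).comp (Bmat kk α).toContinuousLinearMap).bilinearComp M.subtypeL M.subtypeL

lemma energyForm_apply (kk : Fin ν → ℕ) (α : MIdx kk → ℝ) (M : Submodule ℝ (Spc kk)) (s t : M) :
    energyForm kk α M s t = ∑ n, α n * (linF kk n s * linF kk n t) :=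
  inner_Bmat kk α s t

lemma energyForm_self_div_two (kk : Fin ν → ℕ) (α : MIdx kk → ℝ) (M : Submodule ℝ (Spc kk))
    (t : M) : energyForm kk α M t t / 2 = qform kk α t := by
  simp only [energyForm_apply, qform, sq]
  ring

lemma energyForm_pos {kk : Fin ν → ℕ} {α : MIdx kk → ℝ} (hα : ∀ n, 0 < α n)
    {M : Submodule ℝ (Spc kk)} (hMker : M ⊓ LinearMap.ker (Bmat kk α) = ⊥) {t : M} (ht : t ≠ 0) :
    0 < energyForm kk α M t t := by
  have hlinF : ∃ n, linF kk n t ≠ 0 := by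
    by_contra! h
    have hmem : (t : Spc kk) ∈ M ⊓ LinearMap.ker (Bmat kk α) :=
      ⟨t.2, (mem_ker_Bmat_iff hα _).2 h⟩
    rw [hMker, Submodule.mem_bot] at hmem
    exact ht (Subtype.ext hmem)
  obtain ⟨n, hn⟩ := hlinF
  rw [energyForm_apply]
  exact Finset.sum_pos' (fun n _ ↦ mul_nonneg (hα n).le (mul_self_nonneg _))
    ⟨n, Finset.mem_univ n, mul_pos (hα n) (mul_self_pos.2 hn)⟩

lemma exists_expM_linF_mul_linF_eq {kk : Fin ν → ℕ} (hkk : ∀ j, 0 < kk j) {α : MIdx kk → ℝ}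
    (hα : ∀ n, 0 < α n) {M : Submodule ℝ (Spc kk)}
    (hcodim : Module.finrank ℝ M + (ν - 1) = Module.finrank ℝ (Spc kk))
    (hMker : M ⊓ LinearMap.ker (Bmat kk α) = ⊥) (p : MIdx kk) :
    ∃ x : Spc kk, (∀ t, ∑ n, α n * (linF kk n t * linF kk n x) = linF kk p t) ∧
      ∀ m, expM kk M α (fun t ↦ linF kk m t * linF kk p t) = linF kk m x := by
  have hcoercive := isCoercive_of_pos fun _ ↦ energyForm_pos hα hMker
  have hsymm (s t : M) : energyForm kk α M s t = energyForm kk α M t s := by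
    simp only [energyForm_apply, mul_comm (linF kk _ (s : Spc kk))]
  obtain ⟨x, hx⟩ := exists_apply_eq_of_isCoercive hcoercive
    (linF kk p ∘ₗ M.subtype).toContinuousLinearMap
  have hxM (t : M) : energyForm kk α M x t = linF kk p t := DFunLike.congr_fun hx t
  refine ⟨x, fun t ↦ ?_, fun m ↦ ?_⟩
  · obtain ⟨u, hu, w, hw, rfl⟩ : ∃ u ∈ M, ∃ w ∈ LinearMap.ker (Bmat kk α), u + w = t :=
      Submodule.mem_sup.1 ((isCompl_ker_Bmat hkk hα hcodim hMker).sup_eq_top ▸ Submodule.mem_top)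
    simpa [energyForm_apply, (mem_ker_Bmat_iff hα w).1 hw, mul_comm (linF kk _ u)] using hxM ⟨u, hu⟩
  · have hparts := integral_mul_mul_exp_neg_half (μ := volume) hcoercive hsymm
      (linF kk m ∘ₗ M.subtype).toContinuousLinearMap x
    simp only [energyForm_self_div_two, hxM] at hparts
    have hpos : 0 < ∫ t : M, exp (-qform kk α t) := by
      simpa only [energyForm_self_div_two] using
        integral_exp_pos (integrable_exp_neg_half (μ := volume) hcoercive)
    exact (div_eq_iff hpos.ne').2 hparts

lemma linF_toLp (kk : Fin ν → ℕ) (n : MIdx kk) (u : ∀ j, Fin (kk j) → ℝ) :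
    linF kk n (WithLp.toLp 2 fun q ↦ u q.1 q.2) = blockSum u n :=
  linF_apply ..

theorem abs_expM_linF_mul_linF_le {kk : Fin ν → ℕ} (hkk : ∀ j, 0 < kk j) {r R : ℝ} (hr : 0 < r)
    {α : MIdx kk → ℝ} (hα : ∀ n, r ≤ α n) (hαR : ∀ n, α n ≤ R) {M : Submodule ℝ (Spc kk)}
    (hcodim : Module.finrank ℝ M + (ν - 1) = Module.finrank ℝ (Spc kk))
    (hMker : M ⊓ LinearMap.ker (Bmat kk α) = ⊥) (m p : MIdx kk) :
    |expM kk M α (fun t ↦ linF kk m t * linF kk p t)| ≤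
      ((∑ j with m j = p j, (kk j : ℝ)) / r + 2 * ν ^ 3 * R ^ 2 / r ^ 3) / ∏ j, (kk j : ℝ) := by
  have hN : 0 < ∏ j, (kk j : ℝ) := Finset.prod_pos fun j _ ↦ by exact_mod_cast hkk j
  obtain ⟨x, hx, hcov⟩ :=
    exists_expM_linF_mul_linF_eq hkk (fun n ↦ hr.trans_le (hα n)) hcodim hMker p
  rw [hcov]
  let y (j : Fin ν) (i : Fin (kk j)) : ℝ := (∏ j, (kk j : ℝ)) * x ⟨j, i⟩
  have hy (n) : blockSum y n = (∏ j, (kk j : ℝ)) * linF kk n x := by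
    simp only [blockSum, y, linF_apply, Finset.mul_sum]
  have hnormal (u : ∀ j, Fin (kk j) → ℝ) :
      𝔼 n, α n * (blockSum u n * blockSum y n) = blockSum u p := by
    rw [← linF_toLp, ← hx]
    simp only [hy, linF_toLp, Fintype.expect_eq_sum_div_card, Fintype.card_pi, Fintype.card_fin,
      Nat.cast_prod, Finset.sum_div]
    exact Finset.sum_congr rfl fun n _ ↦ by field_simp
  have hbound := abs_blockSum_le_of_normal_equations hr hα hαR hnormal m
  rw [hy, abs_mul, abs_of_pos hN] at hbound
  rw [le_div_iff₀' hN]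
  simpa only [Fintype.card_fin] using hbound

lemma card_div_prod_card_le {kk : Fin ν → ℕ} {l : ℝ} (hl : 0 < l) (hkk : ∀ j, l ≤ kk j)
    (j : Fin ν) : kk j / ∏ i, (kk i : ℝ) ≤ 1 / l ^ (ν - 1) := by
  have hpos (i) : (0 : ℝ) < kk i := hl.trans_le (hkk i)
  have hpow : l ^ (ν - 1) ≤ ∏ i ∈ Finset.univ.erase j, (kk i : ℝ) := by
    simpa using Finset.prod_le_prod (s := Finset.univ.erase j) (fun _ _ ↦ hl.le) fun i _ ↦ hkk i
  rw [← Finset.mul_prod_erase _ _ (Finset.mem_univ j), div_mul_cancel_left₀ (hpos j).ne', ← one_div]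
  gcongr

lemma sum_card_div_prod_card_le {kk : Fin ν → ℕ} {l : ℝ} (hl : 0 < l) (hkk : ∀ j, l ≤ kk j)
    (s : Finset (Fin ν)) : (∑ j ∈ s, (kk j : ℝ)) / ∏ j, (kk j : ℝ) ≤ ν / l ^ (ν - 1) :=
  calc (∑ j ∈ s, (kk j : ℝ)) / ∏ j, (kk j : ℝ)
      = ∑ j ∈ s, kk j / ∏ j, (kk j : ℝ) := Finset.sum_div ..
    _ ≤ ∑ j, kk j / ∏ j, (kk j : ℝ) :=
      Finset.sum_le_univ_sum_of_nonneg fun j ↦ by positivity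
    _ ≤ ∑ _j : Fin ν, 1 / l ^ (ν - 1) :=
      Finset.sum_le_sum fun j _ ↦ card_div_prod_card_le hl hkk j
    _ = ν / l ^ (ν - 1) := by simp [div_eq_mul_inv]

lemma div_le_cube_mul_sq_div_cube {r R : ℝ} (hr : 0 < r) (hrR : r ≤ R) (n : ℕ) :
    n / r ≤ n ^ 3 * R ^ 2 / r ^ 3 := by
  have hn : (n : ℝ) ≤ n ^ 3 := by exact_mod_cast Nat.le_self_pow (by norm_num) n
  calc n / r = n * r ^ 2 / r ^ 3 := by field_simp
    _ ≤ n ^ 3 * R ^ 2 / r ^ 3 := by gcongr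

theorem statement8_general (ν : ℕ) (kk : Fin ν → ℕ) (r R l : ℝ) (hr : 0 < r) (hrR : r ≤ R)
    (hl : 1 ≤ l) (hkk : ∀ j, l ≤ kk j) (α : MIdx kk → ℝ) (hα1 : ∀ m, r ≤ α m) (hα2 : ∀ m, α m ≤ R)
    (M : Submodule ℝ (Spc kk))
    (hcodim : Module.finrank ℝ M + (ν - 1) = Module.finrank ℝ (Spc kk))
    (hMker : M ⊓ LinearMap.ker (Bmat kk α) = ⊥) (m p : MIdx kk) :
    |expM kk M α (fun t ↦ linF kk m t * linF kk p t)|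
        ≤ 3 * ν ^ 3 * R ^ 2 / r ^ 3 / l ^ (ν - 1) ∧
      ((∀ j, m j ≠ p j) → |expM kk M α (fun t ↦ linF kk m t * linF kk p t)|
        ≤ 2 * ν ^ 3 * R ^ 2 / r ^ 3 / l ^ ν) := by
  have hlpos : 0 < l := one_pos.trans_le hl
  have hbound := abs_expM_linF_mul_linF_le (fun j ↦ by exact_mod_cast hlpos.trans_le (hkk j))
    hr hα1 hα2 hcodim hMker m p
  have hprod : l ^ ν ≤ ∏ j, (kk j : ℝ) := by
    simpa using Finset.prod_le_prod (s := Finset.univ) (fun _ _ ↦ hlpos.le) fun j _ ↦ hkk j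
  refine ⟨hbound.trans ?_, fun hmp ↦ hbound.trans ?_⟩
  · have hdiag : (∑ j with m j = p j, (kk j : ℝ)) / r / ∏ j, (kk j : ℝ)
        ≤ ν ^ 3 * R ^ 2 / r ^ 3 / l ^ (ν - 1) := by
      calc (∑ j with m j = p j, (kk j : ℝ)) / r / ∏ j, (kk j : ℝ)
          = (∑ j with m j = p j, (kk j : ℝ)) / (∏ j, (kk j : ℝ)) / r := div_right_comm ..
        _ ≤ ν / l ^ (ν - 1) / r :=
          div_le_div_of_nonneg_right (sum_card_div_prod_card_le hlpos hkk _) hr.le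
        _ = ν / r / l ^ (ν - 1) := div_right_comm ..
        _ ≤ ν ^ 3 * R ^ 2 / r ^ 3 / l ^ (ν - 1) :=
          div_le_div_of_nonneg_right (div_le_cube_mul_sq_div_cube hr hrR ν) (by positivity)
    have hrest : 2 * ν ^ 3 * R ^ 2 / r ^ 3 / ∏ j, (kk j : ℝ)
        ≤ 2 * ν ^ 3 * R ^ 2 / r ^ 3 / l ^ (ν - 1) := by
      gcongr
      exact (pow_le_pow_right₀ hl (Nat.sub_le ν 1)).trans hprod
    rw [add_div]
    exact (add_le_add hdiag hrest).trans_eq (by ring)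
  · simp only [hmp, Finset.filter_false, Finset.sum_empty, zero_div, zero_add]
    gcongr

lemma div_pow_le_gamma_div_pow {r R ω k c : ℝ} {ν e : ℕ} (hν : 1 ≤ ν) (hr : 0 < r) (hω : 0 < ω)
    (hω1 : ω ≤ 1) (hk : 0 < k) (hc : c ≤ 3) (he : e ≤ 7 * ν - 5) :
    c * ν ^ 3 * R ^ 2 / r ^ 3 / (ω * k) ^ e
      ≤ 14 * (ν : ℝ) ^ 4 * R ^ 2 / (r ^ 3 * ω ^ (7 * ν - 5)) / k ^ e := by
  have hνcast : (1 : ℝ) ≤ ν := by exact_mod_cast hν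
  have hcoeff : c * (ν : ℝ) ^ 3 ≤ 14 * (ν : ℝ) ^ 4 :=
    mul_le_mul (by linarith) (pow_le_pow_right₀ hνcast (by norm_num)) (by positivity) (by norm_num)
  have hωpow : ω ^ (7 * ν - 5) ≤ ω ^ e := pow_le_pow_of_le_one hω.le hω1 he
  rw [mul_pow, div_div, ← mul_assoc, div_div]
  gcongr

/-- For `ν ≥ 3` and `ℳ` a subspace of codimension `ν−1` with
`ℳ ∩ ker(q) = {0}`, the correlations of `t` drawn from the distribution with density
proportional to `e^{−q}` on `ℳ` satisfy
`|E[(τ_{1,m_1}+⋯+τ_{ν,m_ν})(τ_{1,p_1}+⋯+τ_{ν,p_ν})]| ≤ Γ/k^{ν−1}` with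
`Γ = 14ν⁴R²/(r³ω^{7ν−5})`, and `≤ Γ/k^ν` when `m_j ≠ p_j` for every `j`. -/
theorem statement8 (ν : ℕ) (hν : 3 ≤ ν) (kk : Fin ν → ℕ) (hkk : ∀ j, 2 ≤ kk j)
    (r R ω k : ℝ) (hr : 0 < r) (hrR : r ≤ R) (hω0 : 0 < ω) (hω1 : ω ≤ 1)
    (hωk : 1 ≤ ω * k) (hlow : ∀ j, ω * k ≤ kk j) (hhigh : ∀ j, (kk j : ℝ) ≤ k)
    (α : MIdx kk → ℝ) (hα1 : ∀ m, r ≤ α m) (hα2 : ∀ m, α m ≤ R)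
    (M : Submodule ℝ (Spc kk))
    (hcodim : Module.finrank ℝ ↥M + (ν - 1) = Module.finrank ℝ (Spc kk))
    (hMker : M ⊓ LinearMap.ker (Bmat kk α) = ⊥)
    (m p : MIdx kk) :
    |expM kk M α (fun t => linF kk m t * linF kk p t)|
        ≤ (14 * (ν : ℝ)^4 * R^2 / (r^3 * ω ^ (7 * ν - 5))) / k ^ (ν - 1)
      ∧ ((∀ j, m j ≠ p j) →
        |expM kk M α (fun t => linF kk m t * linF kk p t)|
          ≤ (14 * (ν : ℝ)^4 * R^2 / (r^3 * ω ^ (7 * ν - 5))) / k ^ ν) := by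
  have hk : 0 < k := pos_of_mul_pos_right (one_pos.trans_le hωk) hω0.le
  have h := statement8_general ν kk r R (ω * k) hr hrR hωk hlow α hα1 hα2 M hcodim hMker m p
  exact ⟨h.1.trans (div_pow_le_gamma_div_pow (by omega) hr hω0 hω1 hk le_rfl (by omega)),
    fun hmp ↦ (h.2 hmp).trans
      (div_pow_le_gamma_div_pow (by omega) hr hω0 hω1 hk (by norm_num) (by omega))⟩
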